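/- Consider the Subtle example: Y is uniformly distributed on Fin 3 (states 0, 1, 2, representing y-values 00, 01, 11), with predictors X₁ = f₁(Y) and X₂ = f₂(Y) where f₁(0) = f₁(1) = 0, f₁(2) = 1 and f₂(0) = 0, f₂(1) = f₂(2) = 1. Let Q be any random variable on a finite type jointly distributed with Y (via a joint pmf p on Q × Fin 3 whose marginal on Fin 3 is uniform). If I(Q:Y|X₁) = 0 and I(Q:Y|X₂) = 0, then I(Q:Y) = 0. (Hence I_α(X₁, X₂ : Y) = 0 for the Subtle example, so I_α violates Local Positivity.) -/

import Mathlib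

open Real Finset

/- STATEMENT 9: The Subtle example.  `Y` is uniform on `Fin 3` (states `00`, `01`, `11`),
with predictors `X₁ = f₁(Y)`, `X₂ = f₂(Y)` where `f₁ = ![0,0,1]` and `f₂ = ![0,1,1]`.
For any `Q` jointly distributed with `Y`, if `I(Q:Y|X₁) = 0` and `I(Q:Y|X₂) = 0` then
`I(Q:Y) = 0`.  Hence `I_α(X₁, X₂ : Y) = 0` for Subtle. -/

section Defs

variable {Q Y X : Type*} [Fintype Q] [Fintype Y] [Fintype X] [DecidableEq X]

/-- Induced joint pmf of `(Q, X, Y)` where `X = f(Y)`. -/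
noncomputable def ind (p : Q × Y → ℝ) (f : Y → X) : Q × X × Y → ℝ :=
  fun a => if a.2.1 = f a.2.2 then p (a.1, a.2.2) else 0

/-- Marginal of `X` under the induced pmf. -/
noncomputable def indX (p : Q × Y → ℝ) (f : Y → X) (x : X) : ℝ :=
  ∑ q, ∑ y, ind p f (q, x, y)

/-- Marginal of `(Q, X)` under the induced pmf. -/
noncomputable def indQX (p : Q × Y → ℝ) (f : Y → X) (q : Q) (x : X) : ℝ :=
  ∑ y, ind p f (q, x, y)

/-- Marginal of `(X, Y)` under the induced pmf. -/
noncomputable def indXY (p : Q × Y → ℝ) (f : Y → X) (x : X) (y : Y) : ℝ :=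
  ∑ q, ind p f (q, x, y)

/-- Marginal of `Y`. -/
noncomputable def margY (p : Q × Y → ℝ) (y : Y) : ℝ :=
  ∑ q, p (q, y)

/-- Marginal of `Q`. -/
noncomputable def margQ (p : Q × Y → ℝ) (q : Q) : ℝ :=
  ∑ y, p (q, y)

/-- Conditional mutual information `I(Q:Y|X)` for `X = f(Y)`. -/
noncomputable def condMI (p : Q × Y → ℝ) (f : Y → X) : ℝ :=
  ∑ q, ∑ x, ∑ y,
    ind p f (q, x, y) *
      logb 2 (ind p f (q, x, y) * indX p f x / (indQX p f q x * indXY p f x y))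

/-- Mutual information `I(Q:Y)`. -/
noncomputable def miQY (p : Q × Y → ℝ) : ℝ :=
  ∑ q, ∑ y, p (q, y) * logb 2 (p (q, y) / (margQ p q * margY p y))

end Defs

/-!
Equality in Gibbs' inequality turns `I(Q:Y|f(Y)) = 0` into the Markov chain `Q - f(Y) - Y`:
the law of `Q` given `Y = y` depends on `y` only through `f y`. If this holds for several
predictors, that law is constant on the classes of the join of their kernels on the support of
`Y`. When the join is trivial, as for Subtle, where `f₁` identifies `0` with `1` and `f₂`
identifies `1` with `2`, the law does not depend on `y` at all, and `Q` is independent of `Y`.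
-/

theorem eq_of_sum_mul_log_div_nonpos {ι : Type*} {s : Finset ι} {a b : ι → ℝ}
    (ha : ∀ i ∈ s, 0 ≤ a i) (hb : ∀ i ∈ s, 0 ≤ b i) (hab : ∀ i ∈ s, b i = 0 → a i = 0)
    (hsum : ∑ i ∈ s, b i ≤ ∑ i ∈ s, a i) (h : ∑ i ∈ s, a i * log (a i / b i) ≤ 0) :
    ∀ i ∈ s, a i = b i := by
  have hterm : ∀ i ∈ s, b i * InformationTheory.klFun (a i / b i) =
      a i * log (a i / b i) + b i - a i := fun i hi ↦ by
    have hcancel : b i * (a i / b i) = a i := mul_div_cancel_of_imp' (hab i hi)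
    rw [InformationTheory.klFun]
    linear_combination (log (a i / b i) - 1) * hcancel
  have hterm_nonneg : ∀ i ∈ s, 0 ≤ b i * InformationTheory.klFun (a i / b i) := fun i hi ↦
    mul_nonneg (hb i hi) (InformationTheory.klFun_nonneg (div_nonneg (ha i hi) (hb i hi)))
  have hdiv_nonpos : ∑ i ∈ s, b i * InformationTheory.klFun (a i / b i) ≤ 0 := by
    rw [sum_congr rfl hterm, sum_sub_distrib, sum_add_distrib]
    linarith
  intro i hi
  have hzero := (sum_eq_zero_iff_of_nonneg hterm_nonneg).1
    (hdiv_nonpos.antisymm (sum_nonneg hterm_nonneg)) i hi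
  rcases mul_eq_zero.1 hzero with hbi | hkl
  · rw [hab i hi hbi, hbi]
  · rw [InformationTheory.klFun_eq_zero_iff (div_nonneg (ha i hi) (hb i hi))] at hkl
    exact eq_of_div_eq_one hkl

theorem iSup_ker_eq_top_of_forall_exists_eq {ι Y : Type*} {X : ι → Type*} {f : ∀ i, Y → X i}
    (y₀ : Y) (h : ∀ y, ∃ i, f i y = f i y₀) : ⨆ i, Setoid.ker (f i) = ⊤ := by
  have hy₀ : ∀ y, (⨆ i, Setoid.ker (f i)) y y₀ := fun y ↦
    let ⟨i, hi⟩ := h y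
    le_iSup (fun i ↦ Setoid.ker (f i)) i hi
  exact eq_top_iff.2 fun {y y'} _ ↦ Setoid.trans' _ (hy₀ y) (Setoid.symm' _ (hy₀ y'))

section Marginals

variable {Q Y X : Type*} [DecidableEq X] {p : Q × Y → ℝ}

theorem ind_nonneg (hp : ∀ a, 0 ≤ p a) (f : Y → X) (a : Q × X × Y) : 0 ≤ ind p f a :=
  ite_nonneg (hp _) le_rfl

theorem ind_apply_self (p : Q × Y → ℝ) (f : Y → X) (q : Q) (y : Y) :
    ind p f (q, f y, y) = p (q, y) :=
  if_pos rfl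

theorem indXY_apply_self [Fintype Q] (p : Q × Y → ℝ) (f : Y → X) (y : Y) :
    indXY p f (f y) y = margY p y :=
  sum_congr rfl fun q _ ↦ ind_apply_self p f q y

theorem indQX_nonneg [Fintype Y] (hp : ∀ a, 0 ≤ p a) (f : Y → X) (q : Q) (x : X) :
    0 ≤ indQX p f q x :=
  sum_nonneg fun _ _ ↦ ind_nonneg hp f _

theorem indXY_nonneg [Fintype Q] (hp : ∀ a, 0 ≤ p a) (f : Y → X) (x : X) (y : Y) :
    0 ≤ indXY p f x y :=
  sum_nonneg fun _ _ ↦ ind_nonneg hp f _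

theorem ind_le_indQX [Fintype Y] (hp : ∀ a, 0 ≤ p a) (f : Y → X) (q : Q) (x : X) (y : Y) :
    ind p f (q, x, y) ≤ indQX p f q x :=
  single_le_sum (f := fun y ↦ ind p f (q, x, y)) (fun _ _ ↦ ind_nonneg hp f _) (mem_univ y)

theorem ind_le_indXY [Fintype Q] (hp : ∀ a, 0 ≤ p a) (f : Y → X) (q : Q) (x : X) (y : Y) :
    ind p f (q, x, y) ≤ indXY p f x y :=
  single_le_sum (f := fun q ↦ ind p f (q, x, y)) (fun _ _ ↦ ind_nonneg hp f _) (mem_univ q)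

variable [Fintype Q] [Fintype Y]

theorem indX_nonneg (hp : ∀ a, 0 ≤ p a) (f : Y → X) (x : X) : 0 ≤ indX p f x :=
  sum_nonneg fun q _ ↦ indQX_nonneg hp f q x

theorem indQX_le_indX (hp : ∀ a, 0 ≤ p a) (f : Y → X) (q : Q) (x : X) :
    indQX p f q x ≤ indX p f x :=
  single_le_sum (f := fun q ↦ indQX p f q x) (fun q _ ↦ indQX_nonneg hp f q x) (mem_univ q)

theorem sum_indXY (p : Q × Y → ℝ) (f : Y → X) (x : X) : ∑ y, indXY p f x y = indX p f x :=
  sum_comm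

theorem sum_margY (p : Q × Y → ℝ) : ∑ y, margY p y = ∑ a, p a :=
  (Fintype.sum_prod_type_right p).symm

end Marginals

section Independence

variable {Q Y X : Type*} [Fintype Q] [Fintype Y] {p : Q × Y → ℝ}

theorem ind_eq_of_condMI_eq_zero [Fintype X] [DecidableEq X] (hp : ∀ a, 0 ≤ p a) {f : Y → X}
    (h : condMI p f = 0) (q : Q) (x : X) (y : Y) :
    ind p f (q, x, y) = indQX p f q x * indXY p f x y / indX p f x := by
  let b : Q × X × Y → ℝ := fun a ↦
    indQX p f a.1 a.2.1 * indXY p f a.2.1 a.2.2 / indX p f a.2.1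
  have hb : ∀ a, 0 ≤ b a := fun a ↦ div_nonneg
    (mul_nonneg (indQX_nonneg hp f _ _) (indXY_nonneg hp f _ _)) (indX_nonneg hp f _)
  have hab : ∀ a, b a = 0 → ind p f a = 0 := by
    rintro ⟨q, x, y⟩ hba
    refine le_antisymm ?_ (ind_nonneg hp f _)
    rcases div_eq_zero_iff.1 hba with hmul | hX
    · rcases mul_eq_zero.1 hmul with hQX | hXY
      · exact (ind_le_indQX hp f q x y).trans_eq hQX
      · exact (ind_le_indXY hp f q x y).trans_eq hXY
    · exact (ind_le_indQX hp f q x y).trans ((indQX_le_indX hp f q x).trans_eq hX)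
  have hsum : ∑ a, b a ≤ ∑ a, ind p f a := by
    simp only [b, Fintype.sum_prod_type, mul_div_assoc, ← mul_sum, ← sum_div, sum_indXY]
    exact sum_le_sum fun q _ ↦ sum_le_sum fun x _ ↦
      mul_le_of_le_one_right (indQX_nonneg hp f q x) (div_self_le_one _)
  have hlog : ∑ a, ind p f a * log (ind p f a / b a) = 0 := by
    have hlogb : ∑ a, ind p f a * logb 2 (ind p f a / b a) = 0 := by
      simpa only [condMI, b, Fintype.sum_prod_type, div_div_eq_mul_div] using h
    simp only [logb, ← mul_div_assoc, ← sum_div] at hlogb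
    exact (div_eq_zero_iff.1 hlogb).resolve_right (log_pos one_lt_two).ne'
  exact eq_of_sum_mul_log_div_nonpos (fun a _ ↦ ind_nonneg hp f a) (fun a _ ↦ hb a)
    (fun a _ ↦ hab a) hsum hlog.le (q, x, y) (mem_univ _)

theorem div_margY_eq_of_condMI_eq_zero [Fintype X] [DecidableEq X] (hp : ∀ a, 0 ≤ p a)
    {f : Y → X} (h : condMI p f = 0) (q : Q) {y : Y} (hy : margY p y ≠ 0) :
    p (q, y) / margY p y = indQX p f q (f y) / indX p f (f y) := by
  rw [← ind_apply_self p f, ind_eq_of_condMI_eq_zero hp h, indXY_apply_self, mul_div_right_comm,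
    mul_div_cancel_right₀ _ hy]

theorem eq_margQ_mul_margY_of_div_margY_eq (hp : ∀ a, 0 ≤ p a) (hsum : ∑ a, p a = 1) {q : Q}
    (h : ∀ y y', margY p y ≠ 0 → margY p y' ≠ 0 →
      p (q, y) / margY p y = p (q, y') / margY p y') (y : Y) :
    p (q, y) = margQ p q * margY p y := by
  have hzero : ∀ y, margY p y = 0 → p (q, y) = 0 := fun y hy ↦
    (sum_eq_zero_iff_of_nonneg fun _ _ ↦ hp _).1 hy q (mem_univ q)
  have hcross : ∀ y', p (q, y) * margY p y' = p (q, y') * margY p y := fun y' ↦ by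
    by_cases hy : margY p y = 0
    · rw [hzero y hy, hy, zero_mul, mul_zero]
    by_cases hy' : margY p y' = 0
    · rw [hzero y' hy', hy', zero_mul, mul_zero]
    exact (div_eq_div_iff hy hy').1 (h y y' hy hy')
  calc p (q, y) = ∑ y', p (q, y) * margY p y' := by rw [← mul_sum, sum_margY, hsum, mul_one]
    _ = ∑ y', p (q, y') * margY p y := sum_congr rfl fun y' _ ↦ hcross y'
    _ = margQ p q * margY p y := (sum_mul ..).symm

theorem miQY_eq_zero_of_eq_margQ_mul_margY (h : ∀ q y, p (q, y) = margQ p q * margY p y) :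
    miQY p = 0 := by
  refine sum_eq_zero fun q _ ↦ sum_eq_zero fun y _ ↦ ?_
  rw [← h q y]
  rcases eq_or_ne (p (q, y)) 0 with hzero | hne
  · rw [hzero, zero_mul]
  · rw [div_self hne, logb_one, mul_zero]

end Independence

theorem stmt_9_general {Q Y ι : Type*} {X : ι → Type*} [Fintype Q] [Fintype Y]
    [∀ i, Fintype (X i)] [∀ i, DecidableEq (X i)]
    (p : Q × Y → ℝ) (hnn : ∀ a, 0 ≤ p a) (hsum : ∑ a, p a = 1) (f : ∀ i, Y → X i)
    (hf : ⨆ i, Setoid.ker (fun y : Function.support (margY p) ↦ f i y) = ⊤)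
    (h : ∀ i, condMI p (f i) = 0) :
    miQY p = 0 := by
  refine miQY_eq_zero_of_eq_margQ_mul_margY fun q ↦
    eq_margQ_mul_margY_of_div_margY_eq hnn hsum fun y y' hy hy' ↦ ?_
  have hker : ⨆ i, Setoid.ker (fun y : Function.support (margY p) ↦ f i y) ≤
      Setoid.ker fun y : Function.support (margY p) ↦ p (q, y) / margY p y := by
    refine iSup_le fun i ↦ fun {z z'} (hzz' : f i z = f i z') ↦ ?_
    rw [Setoid.ker_def, div_margY_eq_of_condMI_eq_zero hnn (h i) q z.2,
      div_margY_eq_of_condMI_eq_zero hnn (h i) q z'.2, hzz']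
  rw [hf] at hker
  exact hker (x := ⟨y, hy⟩) (y := ⟨y', hy'⟩) trivial

theorem stmt_9 {Q : Type*} [Fintype Q]
    (p : Q × Fin 3 → ℝ)
    (hnn : ∀ a, 0 ≤ p a)
    (hmargY : ∀ y, margY p y = 1 / 3)
    (h1 : condMI p (![0, 0, 1] : Fin 3 → Fin 2) = 0)
    (h2 : condMI p (![0, 1, 1] : Fin 3 → Fin 2) = 0) :
    miQY p = 0 := by
  let f : Fin 2 → Fin 3 → Fin 2 := ![![0, 0, 1], ![0, 1, 1]]
  have hlink : ∀ y, ∃ i, f i y = f i 1 := by decide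
  exact stmt_9_general p hnn (by simp [← sum_margY, hmargY]) f
    (iSup_ker_eq_top_of_forall_exists_eq ⟨1, by simp [hmargY]⟩ fun y ↦ hlink y)
    (Fin.forall_fin_two.2 ⟨h1, h2⟩)
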